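/- arXiv:1007.0912 — 2 statements merged into one kernel-verified Lean document; each statement's English description precedes it below -/
import Mathlib

section
/- Condition (A) holds if and only if ⟨V(x*), ∇f(x*)⟩ = 0 for every x* ∈ Γ, i.e., if and only if the vector field V is tangent to the hypersurface Γ at every point of Γ. -/
open Filter Topology

/-- Partial derivative of `g : ℝⁿ → ℝ` in the `i`-th coordinate direction. -/
noncomputable def pderiv' {n : ℕ} (g : (Fin n → ℝ) → ℝ) (i : Fin n) (x : Fin n → ℝ) : ℝ :=
  fderiv ℝ g x (Pi.single i 1)

/-- Divergence of a vector field on ℝⁿ. -/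
noncomputable def diverg {n : ℕ} (V : (Fin n → ℝ) → (Fin n → ℝ)) (x : Fin n → ℝ) : ℝ :=
  ∑ i, pderiv' (fun y => V y i) i x

/-- Gradient of `g : ℝⁿ → ℝ`. -/
noncomputable def grad' {n : ℕ} (g : (Fin n → ℝ) → ℝ) (x : Fin n → ℝ) : Fin n → ℝ :=
  fun i => pderiv' g i x

/-- The Euclidean inner product on ℝⁿ. -/
noncomputable def dotp {n : ℕ} (u w : Fin n → ℝ) : ℝ := ∑ i, u i * w i

/-- Condition (A): for every `x* ∈ Γ`, `|f x|^(r+1) · div W x → 0` as `x → x*`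
with `x ∈ Ω \ Γ`. -/
def CondA {n : ℕ} (Ω Γ : Set (Fin n → ℝ)) (f : (Fin n → ℝ) → ℝ) (r : ℝ)
    (W : (Fin n → ℝ) → (Fin n → ℝ)) : Prop :=
  ∀ xs ∈ Γ, Filter.Tendsto (fun x => |f x| ^ (r + 1) * diverg W x)
    (nhdsWithin xs (Ω \ Γ)) (nhds 0)

/-- Condition (B): for every `x* ∈ Γ` with `V x* = 0`, one has
`|f x|^r · div W x → 0` and `|f x|^(r+1) · ∂(div W)/∂x_i x → 0` as `x → x*`
with `x ∈ Ω \ Γ`, for each `i`. -/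
def CondB {n : ℕ} (Ω Γ : Set (Fin n → ℝ)) (f : (Fin n → ℝ) → ℝ) (r : ℝ)
    (V W : (Fin n → ℝ) → (Fin n → ℝ)) : Prop :=
  ∀ xs ∈ Γ, V xs = 0 →
    Filter.Tendsto (fun x => |f x| ^ r * diverg W x) (nhdsWithin xs (Ω \ Γ)) (nhds 0) ∧
    ∀ i : Fin n, Filter.Tendsto (fun x => |f x| ^ (r + 1) * pderiv' (diverg W) i x)
      (nhdsWithin xs (Ω \ Γ)) (nhds 0)

/-!
Off the zero set, the product rule for `div (|f|^(-r) V)` multiplied by `|f|^(r+1)` reads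
`|f|^(r+1) div W = |f| div V - r sign(f) ⟨V, ∇f⟩`.
At a zero `x` of `f` the first term on the right tends to `0`, and the factor `sign(f) = ±1` does
not affect convergence to `0`, so Condition (A) at `x` says that `⟨V, ∇f⟩ → 0` off the zero set.
If `∇f x ≠ 0`, then `x` is a limit of points where `f ≠ 0`, and by continuity this means
`⟨V x, ∇f x⟩ = 0`. If `∇f x = 0`, then `⟨V, ∇f⟩ → 0 = ⟨V x, ∇f x⟩` in any case.
-/

theorem hasDerivAt_abs_rpow_of_ne_zero {t : ℝ} (ht : t ≠ 0) (p : ℝ) :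
    HasDerivAt (fun u => |u| ^ p) (p * |t| ^ (p - 1) * SignType.sign t) t :=
  (Real.hasDerivAt_rpow_const (Or.inl (abs_ne_zero.mpr ht))).comp t (hasDerivAt_abs ht)

theorem tendsto_sign_mul_zero_iff {α : Type*} {l : Filter α} {φ g : α → ℝ}
    (hφ : ∀ᶠ a in l, φ a ≠ 0) :
    Tendsto (fun a => SignType.sign (φ a) * g a) l (𝓝 0) ↔ Tendsto g l (𝓝 0) := by
  rw [tendsto_zero_iff_abs_tendsto_zero, tendsto_zero_iff_abs_tendsto_zero g]
  refine tendsto_congr' (hφ.mono fun a ha => ?_)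
  rcases ha.lt_or_gt with h | h <;> simp [h]

theorem tendsto_sub_const_mul_zero_iff {α : Type*} {l : Filter α} {a b : α → ℝ} {r : ℝ}
    (hr : r ≠ 0) (ha : Tendsto a l (𝓝 0)) :
    Tendsto (fun t => a t - r * b t) l (𝓝 0) ↔ Tendsto b l (𝓝 0) := by
  constructor
  · intro h
    simpa [hr] using (ha.sub h).const_mul r⁻¹
  · intro h
    simpa using ha.sub (h.const_mul r)

theorem frequently_ne_of_fderiv_ne_zero {𝕜 E F : Type*} [NontriviallyNormedField 𝕜]
    [NormedAddCommGroup E] [NormedSpace 𝕜 E] [NormedAddCommGroup F] [NormedSpace 𝕜 F]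
    {f : E → F} {x : E} (hf : fderiv 𝕜 f x ≠ 0) (c : F) : ∃ᶠ y in 𝓝 x, f y ≠ c := by
  intro h
  have hconst : f =ᶠ[𝓝 x] fun _ => c := h.mono fun _ => not_not.mp
  exact hf (hconst.fderiv_eq.trans (fderiv_const_apply c))

section VectorCalculus

variable {n : ℕ} {f g : (Fin n → ℝ) → ℝ} {V W : (Fin n → ℝ) → (Fin n → ℝ)} {x : Fin n → ℝ}

theorem dotp_smul_right (c : ℝ) (u w : Fin n → ℝ) : dotp u (c • w) = c * dotp u w :=
  dotProduct_smul c u w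

theorem grad'_eq_zero_of_fderiv_eq_zero (h : fderiv ℝ f x = 0) : grad' f x = 0 := by
  ext i
  simp [grad', pderiv', h]

theorem grad'_comp {φ : ℝ → ℝ} {φ' : ℝ} (hφ : HasDerivAt φ φ' (f x))
    (hf : DifferentiableAt ℝ f x) : grad' (fun y => φ (f y)) x = φ' • grad' f x := by
  ext i
  have h : HasFDerivAt (fun y => φ (f y)) (φ' • fderiv ℝ f x) x :=
    hφ.comp_hasFDerivAt x hf.hasFDerivAt
  simp [grad', pderiv', h.fderiv]

theorem diverg_congr (h : V =ᶠ[𝓝 x] W) : diverg V x = diverg W x := by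
  refine Finset.sum_congr rfl fun i _ => ?_
  have hi : (fun y => V y i) =ᶠ[𝓝 x] fun y => W y i := h.fun_comp (· i)
  rw [pderiv', pderiv', hi.fderiv_eq]

theorem diverg_smul (hg : DifferentiableAt ℝ g x) (hV : DifferentiableAt ℝ V x) :
    diverg (fun y => g y • V y) x = g x * diverg V x + dotp (V x) (grad' g x) := by
  simp only [diverg, dotp, grad', pderiv', Finset.mul_sum, ← Finset.sum_add_distrib]
  refine Finset.sum_congr rfl fun i _ => ?_
  have hVi : DifferentiableAt ℝ (fun y => V y i) x := differentiableAt_pi.mp hV i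
  simp [fderiv_fun_mul hg hVi]

theorem continuousAt_pderiv' (hf : ContDiffAt ℝ 1 f x) (i : Fin n) :
    ContinuousAt (pderiv' f i) x :=
  (hf.continuousAt_fderiv one_ne_zero).clm_apply continuousAt_const

theorem continuousAt_diverg (hV : ContDiffAt ℝ 1 V x) : ContinuousAt (diverg V) x :=
  tendsto_finsetSum _ fun i _ => continuousAt_pderiv' (contDiffAt_pi.mp hV i) i

theorem continuousAt_dotp_grad' (hV : ContinuousAt V x) (hf : ContDiffAt ℝ 1 f x) :
    ContinuousAt (fun y => dotp (V y) (grad' f y)) x :=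
  tendsto_finsetSum _ fun i _ => (continuousAt_pi.mp hV i).mul (continuousAt_pderiv' hf i)

theorem abs_rpow_mul_diverg_abs_rpow_neg_smul (hf : DifferentiableAt ℝ f x)
    (hV : DifferentiableAt ℝ V x) (hx : f x ≠ 0) (r : ℝ) :
    |f x| ^ (r + 1) * diverg (fun y => |f y| ^ (-r) • V y) x =
      |f x| * diverg V x - r * (SignType.sign (f x) * dotp (V x) (grad' f x)) := by
  have hφ := hasDerivAt_abs_rpow_of_ne_zero hx (-r)
  have hpos : 0 < |f x| := abs_pos.mpr hx
  have hpow : |f x| ^ (r + 1) * |f x| ^ (-r) = |f x| := by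
    rw [← Real.rpow_add hpos, add_neg_cancel_comm, Real.rpow_one]
  have hpow' : |f x| ^ (r + 1) * |f x| ^ (-r - 1) = 1 := by
    rw [← Real.rpow_add hpos, show r + 1 + (-r - 1) = 0 by ring, Real.rpow_zero]
  have hg : DifferentiableAt ℝ (fun y => |f y| ^ (-r)) x := hφ.differentiableAt.comp x hf
  rw [diverg_smul hg hV, grad'_comp hφ hf, dotp_smul_right]
  linear_combination diverg V x * hpow -
    r * SignType.sign (f x) * dotp (V x) (grad' f x) * hpow'

theorem tendsto_dotp_grad'_nhdsWithin_ne_zero_iff (hf : ContDiffAt ℝ 1 f x)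
    (hV : ContinuousAt V x) :
    Tendsto (fun y => dotp (V y) (grad' f y)) (𝓝[{y | f y ≠ 0}] x) (𝓝 0) ↔
      dotp (V x) (grad' f x) = 0 := by
  have hlim : Tendsto (fun y => dotp (V y) (grad' f y)) (𝓝[{y | f y ≠ 0}] x)
      (𝓝 (dotp (V x) (grad' f x))) :=
    (continuousAt_dotp_grad' hV hf).mono_left nhdsWithin_le_nhds
  refine ⟨fun h => ?_, fun h => h ▸ hlim⟩
  by_cases hdf : fderiv ℝ f x = 0
  · rw [grad'_eq_zero_of_fderiv_eq_zero hdf]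
    exact dotProduct_zero (V x)
  · have : (𝓝[{y | f y ≠ 0}] x).NeBot :=
      frequently_mem_iff_neBot.mp (frequently_ne_of_fderiv_ne_zero hdf 0)
    exact tendsto_nhds_unique hlim h

theorem tendsto_abs_rpow_mul_diverg_iff {r : ℝ} (hr : r ≠ 0) (hf : ContDiffAt ℝ 1 f x)
    (hV : ContDiffAt ℝ 1 V x) (hx : f x = 0) :
    Tendsto (fun y => |f y| ^ (r + 1) * diverg (fun z => |f z| ^ (-r) • V z) y)
      (𝓝[{y | f y ≠ 0}] x) (𝓝 0) ↔ dotp (V x) (grad' f x) = 0 := by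
  have hne : ∀ᶠ y in 𝓝[{y | f y ≠ 0}] x, f y ≠ 0 := self_mem_nhdsWithin
  have hkey : (fun y => |f y| ^ (r + 1) * diverg (fun z => |f z| ^ (-r) • V z) y)
      =ᶠ[𝓝[{y | f y ≠ 0}] x] fun y =>
        |f y| * diverg V y - r * (SignType.sign (f y) * dotp (V y) (grad' f y)) := by
    filter_upwards [hne, nhdsWithin_le_nhds (hf.eventually (by simp)),
      nhdsWithin_le_nhds (hV.eventually (by simp))] with y hy hfy hVy
    exact abs_rpow_mul_diverg_abs_rpow_neg_smul (hfy.differentiableAt one_ne_zero)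
      (hVy.differentiableAt one_ne_zero) hy r
  have hsmall : Tendsto (fun y => |f y| * diverg V y) (𝓝[{y | f y ≠ 0}] x) (𝓝 0) := by
    have h : ContinuousAt (fun y => |f y| * diverg V y) x :=
      hf.continuousAt.abs.mul (continuousAt_diverg hV)
    simpa [hx] using h.mono_left nhdsWithin_le_nhds
  rw [tendsto_congr' hkey, tendsto_sub_const_mul_zero_iff hr hsmall, tendsto_sign_mul_zero_iff hne,
    tendsto_dotp_grad'_nhdsWithin_ne_zero_iff hf hV.continuousAt]

end VectorCalculus

theorem stmt1_general {n : ℕ} (Ω Γ : Set (Fin n → ℝ)) (hΩ : IsOpen Ω)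
    (f : (Fin n → ℝ) → ℝ) (hf : ContDiffOn ℝ 1 f Ω) (hΓ : Γ = {x | x ∈ Ω ∧ f x = 0})
    (V : (Fin n → ℝ) → (Fin n → ℝ)) (hV : ContDiffOn ℝ 1 V Ω) (r : ℝ) (hr : r ≠ 0)
    (W : (Fin n → ℝ) → (Fin n → ℝ)) (hW : ∀ x ∈ Ω \ Γ, W x = |f x| ^ (-r) • V x) :
    CondA Ω Γ f r W ↔ ∀ xs ∈ Γ, dotp (V xs) (grad' f xs) = 0 := by
  have hdiff : Ω \ Γ = Ω ∩ {x | f x ≠ 0} := by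
    ext x
    simp +contextual [hΓ]
  have hopen : IsOpen (Ω \ Γ) :=
    hdiff ▸ hf.continuousOn.isOpen_inter_preimage hΩ isOpen_compl_singleton
  refine forall₂_congr fun xs hxs => ?_
  obtain ⟨hxsΩ, hfxs⟩ : xs ∈ Ω ∧ f xs = 0 := by rwa [hΓ] at hxs
  have hΩxs : Ω ∈ 𝓝 xs := hΩ.mem_nhds hxsΩ
  have hnhds : 𝓝[Ω \ Γ] xs = 𝓝[{x | f x ≠ 0}] xs := by
    rw [hdiff, nhdsWithin_inter_of_mem (mem_nhdsWithin_of_mem_nhds hΩxs)]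
  have hdiv : ∀ x ∈ Ω \ Γ, diverg W x = diverg (fun y => |f y| ^ (-r) • V y) x :=
    fun x hx => diverg_congr (eventually_of_mem (hopen.mem_nhds hx) hW)
  rw [← tendsto_abs_rpow_mul_diverg_iff hr (hf.contDiffAt hΩxs) (hV.contDiffAt hΩxs) hfxs, ← hnhds]
  exact tendsto_congr' (eventually_of_mem self_mem_nhdsWithin fun x hx =>
    congrArg (|f x| ^ (r + 1) * ·) (hdiv x hx))

/-- Condition (A) holds iff `⟨V x*, ∇f x*⟩ = 0` for every `x* ∈ Γ`, i.e. iff `V` is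
tangent to the hypersurface `Γ` at every point of `Γ`. -/
theorem stmt1 {n : ℕ} (hn : 2 ≤ n) (Ω Γ : Set (Fin n → ℝ)) (hΩ : IsOpen Ω)
    (f : (Fin n → ℝ) → ℝ) (s : ℕ) (hs : 2 ≤ s) (hf : ContDiffOn ℝ s f Ω)
    (hΓ : Γ = {x | x ∈ Ω ∧ f x = 0}) (hΓne : Γ.Nonempty)
    (hreg : ∀ x ∈ Γ, grad' f x ≠ 0)
    (V : (Fin n → ℝ) → (Fin n → ℝ)) (hV : ContDiffOn ℝ s V Ω)
    (r : ℝ) (hr : 0 < r)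
    (W : (Fin n → ℝ) → (Fin n → ℝ))
    (hW : ∀ x ∈ Ω \ Γ, W x = |f x| ^ (-r) • V x) :
    CondA Ω Γ f r W ↔ ∀ xs ∈ Γ, dotp (V xs) (grad' f xs) = 0 := by
  have hs' : (1 : WithTop ℕ∞) ≤ s := by exact_mod_cast one_le_two.trans hs
  exact stmt1_general Ω Γ hΩ f (hf.of_le hs') hΓ V (hV.of_le hs') r hr.ne' W hW
end

section
/- Let N ∈ ℕ and suppose p₁λ₁ + p₂λ₂ ≠ 0 for all nonnegative integers p₁, p₂ with 1 ≤ p₁ + p₂ ≤ N. Then there exist C^∞ functions U⁽¹⁾, …, U⁽ˡ⁾ defined on a neighborhood of 0 in ℝ^{2+l} whose gradients with respect to the variables ζ = (ζ₁, …, ζ_l) at the point 0 are linearly independent, such that for each i the Lie derivative L_V U⁽ⁱ⁾ = ⟨V, ∇U⁽ⁱ⁾⟩ is N-flat by (ξ, η) at 0, i.e., ∂^{p₁+p₂}(L_V U⁽ⁱ⁾)/∂ξ^{p₁}∂η^{p₂}(0, 0, ζ) = 0 for all nonnegative integers p₁, p₂ with p₁ + p₂ ≤ N and all ζ in a neighborhood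 of 0 in ℝ^l. -/
open Filter Topology

/-!
In the ring of smooth germs at the base point, let `I` be the ideal generated by the functions `uᵢ`
(here `ξ` and `η`). A vector field `V = ∑ uᵢ Aᵢ` maps every germ into `I`. If `Aⱼ uᵢ` vanishes at
the base point for `j ≠ i`, then `V uᵢ ≡ λᵢ uᵢ` modulo `𝔪 I`, where `λᵢ = Aᵢ uᵢ` and `𝔪` is the
maximal ideal, so modulo `𝔪` the monomials `u^p` of degree `m` are eigenvectors of the endomorphism
of `I^m / I^(m+1)` induced by `V`, with eigenvalues `∑ pᵢ λᵢ`. If these are nonzero, the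
endomorphism is surjective modulo `𝔪`, hence surjective by Nakayama's lemma. So the part of `V f` of
lowest degree in `u` can be removed by correcting `f` within `I`, degree after degree up to `N`. The
corrections do not change the derivatives of `f` along the common kernel of the `duᵢ`, and elements
of `I^(N+1)` are `N`-flat on the common zero set of the `uᵢ`.
-/

open scoped ContDiff

lemma multiset_sum_map_eq_sum_count_nsmul {ι M : Type*} [Fintype ι] [DecidableEq ι]
    [AddCommMonoid M] (s : Multiset ι) (f : ι → M) : (s.map f).sum = ∑ i, s.count i • f i := by
  rw [Finset.sum_multiset_map_count]
  refine Finset.sum_subset (Finset.subset_univ _) fun i _ hi => ?_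
  rw [Multiset.count_eq_zero.2 (mt Multiset.mem_toFinset.2 hi), zero_nsmul]

section Derivation

variable {k R ι : Type*} [CommRing k] [CommRing R] [Algebra k R] (D : Derivation k R R)

lemma derivation_mem_of_mem_span {s : Set R} {J : Ideal R} (hs : s ⊆ J)
    (hDs : ∀ a ∈ s, D a ∈ J) {x : R} (hx : x ∈ Ideal.span s) : D x ∈ J := by
  induction hx using Submodule.span_induction with
  | mem a ha => exact hDs a ha
  | zero => simp
  | add a b _ _ ha hb => simpa using J.add_mem ha hb
  | smul r a ha hDa =>
    rw [smul_eq_mul, D.leibniz]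
    exact J.add_mem (J.mul_mem_left r hDa) (J.mul_mem_right _ (Ideal.span_le.2 hs ha))

lemma span_range_pow_eq_span_multiset_prod (u : ι → R) (m : ℕ) :
    Ideal.span (Set.range u) ^ m
      = Ideal.span ((fun s : Multiset ι => (s.map u).prod) '' {s | s.card = m}) := by
  induction m with
  | zero => simp [Multiset.card_eq_zero]
  | succ m ih =>
    rw [pow_succ', ih, Ideal.span_mul_span']
    congr 1
    ext a
    constructor
    · rintro ⟨_, ⟨i, rfl⟩, _, ⟨s, rfl, rfl⟩, rfl⟩
      exact ⟨i ::ₘ s, by simp, by simp⟩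
    · rintro ⟨s, hs, rfl⟩
      obtain ⟨i, t, rfl, ht⟩ := Multiset.card_eq_succ_iff.1 hs
      exact ⟨u i, ⟨i, rfl⟩, _, ⟨t, ht, rfl⟩, by simp⟩

lemma multiset_prod_mem_span_range_pow (u : ι → R) (s : Multiset ι) :
    (s.map u).prod ∈ Ideal.span (Set.range u) ^ s.card :=
  span_range_pow_eq_span_multiset_prod u s.card ▸ Ideal.subset_span ⟨s, rfl, rfl⟩

lemma sum_smul_derivation_apply [Fintype ι] (u : ι → R) (X : ι → Derivation k R R) (a : R) :
    (∑ j, u j • X j) a = ∑ j, X j a * u j := by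
  rw [← Derivation.coeFnAddMonoidHom_apply, map_sum, Finset.sum_apply]
  exact Finset.sum_congr rfl fun j _ => mul_comm _ _

variable {u c : ι → R} {J : Ideal R}

lemma derivation_multiset_prod_sub_mem
    (hDu : ∀ i, D (u i) - c i * u i ∈ J * Ideal.span (Set.range u)) (s : Multiset ι) :
    D (s.map u).prod - (s.map c).sum * (s.map u).prod
      ∈ J * Ideal.span (Set.range u) ^ s.card := by
  set I := Ideal.span (Set.range u)
  induction s using Multiset.induction with
  | empty => simp
  | cons i s ih =>
    have hleft : u i * (D (s.map u).prod - (s.map c).sum * (s.map u).prod)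
        ∈ J * I ^ (s.card + 1) := by
      rw [pow_succ', mul_left_comm J]
      exact Ideal.mul_mem_mul (Ideal.subset_span ⟨i, rfl⟩) ih
    have hright : (s.map u).prod * (D (u i) - c i * u i) ∈ J * I ^ (s.card + 1) := by
      rw [pow_succ, mul_left_comm J]
      exact Ideal.mul_mem_mul (multiset_prod_mem_span_range_pow u s) (hDu i)
    rw [Multiset.card_cons]
    convert add_mem hleft hright using 1
    simp only [Multiset.map_cons, Multiset.prod_cons, Multiset.sum_cons, D.leibniz, smul_eq_mul]
    ring

/-- For a derivation with values in `I`, the preimage in `R` of the image of the `R`-linear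
endomorphism of `I ^ m / I ^ (m + 1)` that it induces. -/
def gradedImage {I : Ideal R} (hD : ∀ a, D a ∈ I) (m : ℕ) : Ideal R where
  carrier := {x | ∃ y ∈ I ^ m, D y - x ∈ I ^ (m + 1)}
  zero_mem' := ⟨0, zero_mem _, by simp⟩
  add_mem' := by
    rintro a b ⟨y, hy, hya⟩ ⟨z, hz, hzb⟩
    refine ⟨y + z, add_mem hy hz, ?_⟩
    simpa [add_sub_add_comm] using add_mem hya hzb
  smul_mem' := by
    rintro r a ⟨y, hy, hya⟩
    refine ⟨r * y, Ideal.mul_mem_left _ r hy, ?_⟩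
    have h : D (r * y) - r * a = r * (D y - a) + y * D r := by simp; ring
    rw [smul_eq_mul, h]
    exact add_mem (Ideal.mul_mem_left _ r hya) (pow_succ I m ▸ Ideal.mul_mem_mul hy (hD r))

lemma multiset_prod_mem_gradedImage_sup (hD : ∀ a, D a ∈ Ideal.span (Set.range u))
    (hDu : ∀ i, D (u i) - c i * u i ∈ J * Ideal.span (Set.range u)) {s : Multiset ι}
    (hc : IsUnit (s.map c).sum) :
    (s.map u).prod ∈ gradedImage D hD s.card ⊔ J * Ideal.span (Set.range u) ^ s.card := by
  have himage : D (s.map u).prod ∈ gradedImage D hD s.card :=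
    ⟨_, multiset_prod_mem_span_range_pow u s, by simp⟩
  refine (Ideal.unit_mul_mem_iff_mem _ hc).1 ?_
  rw [← sub_sub_self (D (s.map u).prod) ((s.map c).sum * (s.map u).prod)]
  exact sub_mem (Ideal.mem_sup_left himage)
    (Ideal.mem_sup_right (derivation_multiset_prod_sub_mem D hDu s))

lemma span_range_pow_le_gradedImage [Finite ι] (hJ : J ≤ Ideal.jacobson ⊥)
    (hD : ∀ a, D a ∈ Ideal.span (Set.range u))
    (hDu : ∀ i, D (u i) - c i * u i ∈ J * Ideal.span (Set.range u)) {m : ℕ}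
    (hc : ∀ s : Multiset ι, s.card = m → IsUnit (s.map c).sum) :
    Ideal.span (Set.range u) ^ m ≤ gradedImage D hD m := by
  have hfg : (Ideal.span (Set.range u) ^ m).FG := (Submodule.fg_span (Set.finite_range u)).pow m
  refine Submodule.le_of_le_smul_of_le_jacobson_bot hfg hJ ?_
  refine (span_range_pow_eq_span_multiset_prod u m).trans_le (Ideal.span_le.2 ?_)
  rintro _ ⟨s, rfl, rfl⟩
  exact multiset_prod_mem_gradedImage_sup D hD hDu (hc s rfl)

theorem exists_derivation_add_mem_pow [Finite ι] (hJ : J ≤ Ideal.jacobson ⊥)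
    (hD : ∀ a, D a ∈ Ideal.span (Set.range u))
    (hDu : ∀ i, D (u i) - c i * u i ∈ J * Ideal.span (Set.range u)) {N : ℕ}
    (hc : ∀ s : Multiset ι, 1 ≤ s.card → s.card ≤ N → IsUnit (s.map c).sum) (a : R) :
    ∃ y ∈ Ideal.span (Set.range u), D (a + y) ∈ Ideal.span (Set.range u) ^ (N + 1) := by
  induction N with
  | zero => exact ⟨0, zero_mem _, by simpa using hD a⟩
  | succ N ih =>
    obtain ⟨y, hy, hay⟩ := ih fun s h1 hN => hc s h1 (by omega)
    obtain ⟨z, hz, hDz⟩ := span_range_pow_le_gradedImage D hJ hD hDu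
      (fun s hs => hc s (by omega) hs.le) (neg_mem hay)
    refine ⟨y + z, add_mem hy (Ideal.pow_le_self N.succ_ne_zero hz), ?_⟩
    rwa [← add_assoc, map_add, add_comm (D _), ← sub_neg_eq_add]

theorem exists_sum_smul_derivation_add_mem_pow [Fintype ι] {X : ι → Derivation k R R}
    (hJ : J ≤ Ideal.jacobson ⊥) (hX : ∀ i j, j ≠ i → X j (u i) ∈ J) {N : ℕ}
    (hunit : ∀ s : Multiset ι, 1 ≤ s.card → s.card ≤ N →
      IsUnit (s.map fun i => X i (u i)).sum) (a : R) :
    ∃ y ∈ Ideal.span (Set.range u),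
      (∑ i, u i • X i) (a + y) ∈ Ideal.span (Set.range u) ^ (N + 1) := by
  classical
  have hu (j : ι) : u j ∈ Ideal.span (Set.range u) := Ideal.subset_span ⟨j, rfl⟩
  refine exists_derivation_add_mem_pow _ hJ (fun a => ?_) (fun i => ?_) hunit a
  · rw [sum_smul_derivation_apply]
    exact sum_mem fun j _ => Ideal.mul_mem_left _ _ (hu j)
  · rw [sum_smul_derivation_apply, ← Finset.sum_erase_eq_sub (Finset.mem_univ i)]
    exact sum_mem fun j hj => Ideal.mul_mem_mul (hX i j (Finset.ne_of_mem_erase hj)) (hu j)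

end Derivation

section SmoothGerm

variable (𝕜 : Type*) {E F : Type*} [NontriviallyNormedField 𝕜] [NormedAddCommGroup E]
  [NormedSpace 𝕜 E] [NormedAddCommGroup F] [NormedSpace 𝕜 F]

/-- Smoothness on a neighbourhood of `x`. This is stronger than `ContDiffAt 𝕜 ∞ f x`, which only
provides a neighbourhood depending on the order of differentiability. -/
def SmoothNear (f : E → F) (x : E) : Prop :=
  ∀ᶠ y in 𝓝 x, ContDiffAt 𝕜 ∞ f y

variable {𝕜}

namespace SmoothNear

variable {f g : E → 𝕜} {V : E → E} {x : E}

lemma of_contDiffOn {f : E → F} {s : Set E} (hf : ContDiffOn 𝕜 ∞ f s) (hs : IsOpen s)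
    (hx : x ∈ s) : SmoothNear 𝕜 f x :=
  eventually_of_mem (hs.mem_nhds hx) fun _ hy => hf.contDiffAt (hs.mem_nhds hy)

lemma of_continuousLinearMap (L : E →L[𝕜] F) : SmoothNear 𝕜 L x :=
  .of_forall fun _ => L.contDiff.contDiffAt

lemma const (c : F) : SmoothNear 𝕜 (fun _ : E => c) x :=
  .of_forall fun _ => contDiffAt_const

lemma add (hf : SmoothNear 𝕜 f x) (hg : SmoothNear 𝕜 g x) : SmoothNear 𝕜 (f + g) x :=
  hf.mp (hg.mono fun _ hgy hfy => hfy.add hgy)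

lemma mul (hf : SmoothNear 𝕜 f x) (hg : SmoothNear 𝕜 g x) : SmoothNear 𝕜 (f * g) x :=
  hf.mp (hg.mono fun _ hgy hfy => hfy.mul hgy)

lemma sum_smul {ι : Type*} [Fintype ι] {u : ι → E → 𝕜} {A : ι → E → F}
    (hu : ∀ i, SmoothNear 𝕜 (u i) x) (hA : ∀ i, SmoothNear 𝕜 (A i) x) :
    SmoothNear 𝕜 (fun y => ∑ i, u i y • A i y) x := by
  filter_upwards [eventually_all.2 hu, eventually_all.2 hA] with y huy hAy
  exact ContDiffAt.sum fun i _ => (huy i).smul (hAy i)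

lemma lieDeriv (hf : SmoothNear 𝕜 f x) (hV : SmoothNear 𝕜 V x) :
    SmoothNear 𝕜 (fun y => fderiv 𝕜 f y (V y)) x := by
  filter_upwards [hf, hV] with y hfy hVy
  exact (hfy.fderiv_right le_rfl).clm_apply hVy

lemma eventually_differentiableAt (hf : SmoothNear 𝕜 f x) :
    ∀ᶠ y in 𝓝 x, DifferentiableAt 𝕜 f y :=
  hf.mono fun _ hfy => hfy.differentiableAt (by simp)

lemma eventually_contDiffAt (hf : SmoothNear 𝕜 f x) :
    ∀ᶠ y in 𝓝 x, ∀ n : ℕ, ContDiffAt 𝕜 n f y :=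
  hf.mono fun _ hfy _ => hfy.of_le (mod_cast le_top)

end SmoothNear

variable (𝕜) in
/-- The ring of germs at `x` of scalar functions smooth near `x`. -/
def smoothGerm (x : E) : Subring (Germ (𝓝 x) 𝕜) where
  carrier := {φ | ∃ f : E → 𝕜, SmoothNear 𝕜 f x ∧ f = φ}
  zero_mem' := ⟨0, .const 0, rfl⟩
  one_mem' := ⟨1, .const 1, rfl⟩
  add_mem' := by
    rintro _ _ ⟨f, hf, rfl⟩ ⟨g, hg, rfl⟩
    exact ⟨f + g, hf.add hg, rfl⟩
  mul_mem' := by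
    rintro _ _ ⟨f, hf, rfl⟩ ⟨g, hg, rfl⟩
    exact ⟨f * g, hf.mul hg, rfl⟩
  neg_mem' := by
    rintro _ ⟨f, hf, rfl⟩
    exact ⟨-f, hf.mono fun _ hfy => hfy.neg, rfl⟩

namespace smoothGerm

variable {x : E}

/-- The germ of a function smooth near `x`. -/
def mk (f : E → 𝕜) (hf : SmoothNear 𝕜 f x) : smoothGerm 𝕜 x :=
  ⟨f, f, hf, rfl⟩

lemma exists_mk_eq (φ : smoothGerm 𝕜 x) : ∃ f hf, mk f hf = φ := by
  obtain ⟨_, f, hf, rfl⟩ := φ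
  exact ⟨f, hf, rfl⟩

lemma mk_eq_mk_iff {f g : E → 𝕜} {hf : SmoothNear 𝕜 f x} {hg : SmoothNear 𝕜 g x} :
    mk f hf = mk g hg ↔ f =ᶠ[𝓝 x] g :=
  Subtype.ext_iff.trans Germ.coe_eq

variable (𝕜 x) in
/-- Evaluation of a smooth germ at the base point. -/
def value : smoothGerm 𝕜 x →+* 𝕜 :=
  Germ.valueRingHom.comp (smoothGerm 𝕜 x).subtype

@[simp]
lemma value_mk (f : E → 𝕜) (hf : SmoothNear 𝕜 f x) : value 𝕜 x (mk f hf) = f x :=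
  rfl

lemma isUnit_of_value_ne_zero {φ : smoothGerm 𝕜 x} (hφ : value 𝕜 x φ ≠ 0) : IsUnit φ := by
  obtain ⟨f, hf, rfl⟩ := exists_mk_eq φ
  have hne : ∀ᶠ y in 𝓝 x, f y ≠ 0 := hf.self_of_nhds.continuousAt.eventually_ne hφ
  have hinv : SmoothNear 𝕜 f⁻¹ x := hf.mp (hne.mono fun _ hy hfy => hfy.inv hy)
  refine .of_mul_eq_one (mk f⁻¹ hinv) (mk_eq_mk_iff (hf := hf.mul hinv) (hg := .const 1) |>.2 ?_)
  exact hne.mono fun _ hy => mul_inv_cancel₀ hy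

lemma ker_value_le_jacobson_bot : RingHom.ker (value 𝕜 x) ≤ Ideal.jacobson ⊥ := fun φ hφ =>
  Ideal.mem_jacobson_bot.2 fun ψ => isUnit_of_value_ne_zero (by simp [RingHom.mem_ker.1 hφ])

/-- The Lie derivative along `V` as a derivation of the ring of smooth germs; only its additivity
and the Leibniz rule are recorded, hence the base ring `ℤ`. -/
noncomputable def lieDerivation (V : E → E) (hV : SmoothNear 𝕜 V x) :
    Derivation ℤ (smoothGerm 𝕜 x) (smoothGerm 𝕜 x) :=
  let L (φ : smoothGerm 𝕜 x) : smoothGerm 𝕜 x :=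
    ⟨φ.1.map' (fun f y => fderiv 𝕜 f y (V y)) fun _ _ h =>
      h.fderiv.mono fun y hy => DFunLike.congr_fun hy (V y), by
        obtain ⟨f, hf, rfl⟩ := exists_mk_eq φ
        exact ⟨_, hf.lieDeriv hV, rfl⟩⟩
  have map_add (φ ψ) : L (φ + ψ) = L φ + L ψ := by
    obtain ⟨f, hf, rfl⟩ := exists_mk_eq φ
    obtain ⟨g, hg, rfl⟩ := exists_mk_eq ψ
    refine Subtype.ext (Germ.coe_eq.2 ?_)
    filter_upwards [hf.eventually_differentiableAt, hg.eventually_differentiableAt] with y hfy hgy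
    exact DFunLike.congr_fun (fderiv_add hfy hgy) (V y)
  have leibniz (φ ψ) : L (φ * ψ) = φ * L ψ + ψ * L φ := by
    obtain ⟨f, hf, rfl⟩ := exists_mk_eq φ
    obtain ⟨g, hg, rfl⟩ := exists_mk_eq ψ
    refine Subtype.ext (Germ.coe_eq.2 ?_)
    filter_upwards [hf.eventually_differentiableAt, hg.eventually_differentiableAt] with y hfy hgy
    exact DFunLike.congr_fun (fderiv_mul hfy hgy) (V y)
  .mk' (AddMonoidHom.mk' L map_add).toIntLinearMap leibniz

@[simp]
lemma lieDerivation_mk {V : E → E} (hV : SmoothNear 𝕜 V x) {f : E → 𝕜} (hf : SmoothNear 𝕜 f x) :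
    lieDerivation V hV (mk f hf) = mk (fun y => fderiv 𝕜 f y (V y)) (hf.lieDeriv hV) :=
  rfl

lemma lieDerivation_sum_smul {ι : Type*} [Fintype ι] {u : ι → E → 𝕜} {A : ι → E → E}
    (hu : ∀ i, SmoothNear 𝕜 (u i) x) (hA : ∀ i, SmoothNear 𝕜 (A i) x) :
    lieDerivation (fun y => ∑ i, u i y • A i y) (.sum_smul hu hA)
      = ∑ i, mk (u i) (hu i) • lieDerivation (A i) (hA i) := by
  ext φ
  obtain ⟨f, hf, rfl⟩ := exists_mk_eq φ
  rw [sum_smul_derivation_apply, AddSubmonoidClass.coe_finsetSum]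
  change _ = ∑ i, Germ.coeRingHom (𝓝 x) ((fun y => fderiv 𝕜 f y (A i y)) * u i)
  rw [← map_sum]
  refine Germ.coe_eq.2 (.of_eq ?_)
  ext y
  simp [mul_comm]

end smoothGerm

lemma iteratedFDeriv_mul_eq_zero {f g : E → 𝕜} {x : E} {m n k : ℕ} (hf : ContDiffAt 𝕜 k f x)
    (hg : ContDiffAt 𝕜 k g x) (hfx : ∀ i < m, iteratedFDeriv 𝕜 i f x = 0)
    (hgx : ∀ i < n, iteratedFDeriv 𝕜 i g x = 0) (hk : k < m + n) :
    iteratedFDeriv 𝕜 k (f * g) x = 0 := by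
  obtain ⟨s, hs, hso, hxs⟩ :=
    eventually_nhds_iff.1 ((hf.eventually (by simp)).and (hg.eventually (by simp)))
  have hbound := norm_iteratedFDerivWithin_mul_le (fun y hy => (hs y hy).1.contDiffWithinAt)
    (fun y hy => (hs y hy).2.contDiffWithinAt) hso.uniqueDiffOn hxs le_rfl
  simp only [iteratedFDerivWithin_of_isOpen _ hso hxs] at hbound
  refine norm_le_zero_iff.1 (hbound.trans_eq (Finset.sum_eq_zero fun i hik => ?_))
  rcases lt_or_ge i m with hi | hi
  · simp [hfx i hi]
  · have hki : k - i < n := by have := Finset.mem_range.1 hik; omega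
    simp [hgx (k - i) hki]

namespace smoothGerm

variable {x : E}

/-- The germs at `x` whose derivatives of order less than `m` vanish at all points of `Z`
near `x`. -/
def flatIdeal (x : E) (Z : Set E) (m : ℕ) : Ideal (smoothGerm 𝕜 x) where
  carrier := {φ | ∃ f hf, mk f hf = φ ∧
    ∀ᶠ y in 𝓝 x, y ∈ Z → ∀ k < m, iteratedFDeriv 𝕜 k f y = 0}
  zero_mem' := ⟨0, .const 0, rfl, by simp⟩
  add_mem' := by
    rintro _ _ ⟨f, hf, rfl, hfZ⟩ ⟨g, hg, rfl, hgZ⟩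
    refine ⟨f + g, hf.add hg, rfl, ?_⟩
    filter_upwards [hf.eventually_contDiffAt, hg.eventually_contDiffAt, hfZ, hgZ]
      with y hfy hgy hfyZ hgyZ hy k hk
    rw [iteratedFDeriv_add_apply (hfy k) (hgy k), hfyZ hy k hk, hgyZ hy k hk, add_zero]
  smul_mem' := by
    rintro φ _ ⟨g, hg, rfl, hgZ⟩
    obtain ⟨f, hf, rfl⟩ := exists_mk_eq φ
    refine ⟨f * g, hf.mul hg, rfl, ?_⟩
    filter_upwards [hf.eventually_contDiffAt, hg.eventually_contDiffAt, hgZ]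
      with y hfy hgy hgyZ hy k hk
    exact iteratedFDeriv_mul_eq_zero (m := 0) (hfy k) (hgy k) (by simp) (hgyZ hy) (by omega)

lemma mk_mem_flatIdeal_iff {f : E → 𝕜} {hf : SmoothNear 𝕜 f x} {Z : Set E} {m : ℕ} :
    mk f hf ∈ flatIdeal x Z m ↔ ∀ᶠ y in 𝓝 x, y ∈ Z → ∀ k < m, iteratedFDeriv 𝕜 k f y = 0 := by
  refine ⟨?_, fun h => ⟨f, hf, rfl, h⟩⟩
  rintro ⟨g, hg, hgf, hgZ⟩
  filter_upwards [hgZ, (mk_eq_mk_iff.1 hgf).eventuallyEq_nhds] with y hgy hgfy hy k hk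
  rw [← (hgfy.iteratedFDeriv 𝕜 k).self_of_nhds, hgy hy k hk]

lemma flatIdeal_mul_le (Z : Set E) (m n : ℕ) :
    flatIdeal (𝕜 := 𝕜) x Z m * flatIdeal x Z n ≤ flatIdeal x Z (m + n) := by
  refine Ideal.mul_le.2 ?_
  rintro _ ⟨f, hf, rfl, hfZ⟩ _ ⟨g, hg, rfl, hgZ⟩
  refine ⟨f * g, hf.mul hg, rfl, ?_⟩
  filter_upwards [hf.eventually_contDiffAt, hg.eventually_contDiffAt, hfZ, hgZ]
    with y hfy hgy hfyZ hgyZ hy k hk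
  exact iteratedFDeriv_mul_eq_zero (hfy k) (hgy k) (hfyZ hy) (hgyZ hy) hk

lemma flatIdeal_one_pow_le (Z : Set E) (m : ℕ) :
    flatIdeal (𝕜 := 𝕜) x Z 1 ^ m ≤ flatIdeal x Z m := by
  induction m with
  | zero =>
    intro φ _
    obtain ⟨f, hf, rfl⟩ := exists_mk_eq φ
    exact ⟨f, hf, rfl, by simp⟩
  | succ m ih =>
    rw [pow_succ]
    exact (Ideal.mul_mono_left ih).trans (flatIdeal_mul_le Z m 1)

end smoothGerm

end SmoothGerm

section FlatCorrection

variable {𝕜 E ι : Type*} [NontriviallyNormedField 𝕜] [NormedAddCommGroup E] [NormedSpace 𝕜 E]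
  {u : ι → E → 𝕜} {x : E}

namespace smoothGerm

lemma span_mk_pow_le_flatIdeal (hu : ∀ i, SmoothNear 𝕜 (u i) x) (m : ℕ) :
    Ideal.span (Set.range fun i => mk (u i) (hu i)) ^ m
      ≤ flatIdeal x {y | ∀ i, u i y = 0} m := by
  refine (Ideal.pow_right_mono (Ideal.span_le.2 ?_) m).trans (flatIdeal_one_pow_le _ m)
  rintro _ ⟨i, rfl⟩
  refine mk_mem_flatIdeal_iff.2 (.of_forall fun y hy k hk => ?_)
  obtain rfl : k = 0 := by omega
  ext
  exact hy i

lemma fderiv_apply_eq_zero_of_mem_span {f : E → 𝕜} {hf : SmoothNear 𝕜 f x}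
    (hu : ∀ i, SmoothNear 𝕜 (u i) x) (hux : ∀ i, u i x = 0) {w : E}
    (hw : ∀ i, fderiv 𝕜 (u i) x w = 0)
    (hfu : mk f hf ∈ Ideal.span (Set.range fun i => mk (u i) (hu i))) : fderiv 𝕜 f x w = 0 := by
  refine derivation_mem_of_mem_span (lieDerivation (fun _ => w) (.const w))
    (J := RingHom.ker (value 𝕜 x)) ?_ ?_ hfu
  · rintro _ ⟨i, rfl⟩
    simpa only [SetLike.mem_coe, RingHom.mem_ker, value_mk] using hux i
  · rintro _ ⟨i, rfl⟩
    simpa only [RingHom.mem_ker, lieDerivation_mk, value_mk] using hw i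

end smoothGerm

open smoothGerm

theorem exists_smoothNear_iteratedFDeriv_lieDeriv_eq_zero [Fintype ι] {A : ι → E → E} {f : E → 𝕜}
    (hu : ∀ i, SmoothNear 𝕜 (u i) x) (hux : ∀ i, u i x = 0) (hA : ∀ i, SmoothNear 𝕜 (A i) x)
    (hoff : ∀ i j, j ≠ i → fderiv 𝕜 (u i) x (A j x) = 0) {N : ℕ}
    (hres : ∀ p : ι → ℕ, 1 ≤ ∑ i, p i → ∑ i, p i ≤ N →
      ∑ i, p i • fderiv 𝕜 (u i) x (A i x) ≠ 0) (hf : SmoothNear 𝕜 f x) :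
    ∃ g, SmoothNear 𝕜 g x ∧
      (∀ w, (∀ i, fderiv 𝕜 (u i) x w = 0) → fderiv 𝕜 g x w = fderiv 𝕜 f x w) ∧
      ∀ᶠ y in 𝓝 x, (∀ i, u i y = 0) → ∀ k ≤ N,
        iteratedFDeriv 𝕜 k (fun z => fderiv 𝕜 g z (∑ i, u i z • A i z)) y = 0 := by
  classical
  have hunit (s : Multiset ι) (h1 : 1 ≤ s.card) (hN : s.card ≤ N) :
      IsUnit (s.map fun i => lieDerivation (A i) (hA i) (mk (u i) (hu i))).sum := by
    have hcard : ∑ i, s.count i = s.card := Multiset.sum_count_eq_card fun i _ => Finset.mem_univ i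
    refine isUnit_of_value_ne_zero ?_
    rw [map_multiset_sum, Multiset.map_map, multiset_sum_map_eq_sum_count_nsmul]
    exact hres s.count (hcard ▸ h1) (hcard ▸ hN)
  have hker (i j : ι) (hij : j ≠ i) :
      lieDerivation (A j) (hA j) (mk (u i) (hu i)) ∈ RingHom.ker (value 𝕜 x) := by
    simpa only [RingHom.mem_ker, lieDerivation_mk, value_mk] using hoff i j hij
  obtain ⟨φ, hφ, hflat⟩ := exists_sum_smul_derivation_add_mem_pow
    (X := fun i => lieDerivation (A i) (hA i)) ker_value_le_jacobson_bot hker hunit (mk f hf)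
  obtain ⟨h, hh, rfl⟩ := exists_mk_eq φ
  refine ⟨f + h, hf.add hh, fun w hw => ?_, ?_⟩
  · rw [fderiv_add (hf.self_of_nhds.differentiableAt (by simp))
      (hh.self_of_nhds.differentiableAt (by simp)), add_apply,
      fderiv_apply_eq_zero_of_mem_span hu hux hw hφ, add_zero]
  · rw [← lieDerivation_sum_smul hu hA] at hflat
    have hZ : ∀ᶠ y in 𝓝 x, (∀ i, u i y = 0) → ∀ k < N + 1,
        iteratedFDeriv 𝕜 k (fun z => fderiv 𝕜 (f + h) z (∑ i, u i z • A i z)) y = 0 :=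
      mk_mem_flatIdeal_iff (hf := (hf.add hh).lieDeriv (.sum_smul hu hA)) |>.1
        (span_mk_pow_le_flatIdeal hu (N + 1) hflat)
    exact hZ.mono fun y hy huy k hk => hy huy k (Nat.lt_succ_of_le hk)

end FlatCorrection

/-- If there are no first-type resonances `p₁λ₁ + p₂λ₂ = 0` up to order `N`, then there
exist `C^∞` functions `U⁽¹⁾, …, U⁽ˡ⁾` near `0`, independent by `ζ` at `0`, whose Lie
derivatives along `V` are `N`-flat by `(ξ, η)` at `0`. -/
theorem stmt7 (l : ℕ)
    (U₀ : Set (ℝ × ℝ × (Fin l → ℝ))) (hU₀ : IsOpen U₀) (h0 : (0 : ℝ × ℝ × (Fin l → ℝ)) ∈ U₀)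
    (a b c d : (ℝ × ℝ × (Fin l → ℝ)) → ℝ) (e g : Fin l → (ℝ × ℝ × (Fin l → ℝ)) → ℝ)
    (ha : ContDiffOn ℝ (⊤ : ℕ∞) a U₀) (hb : ContDiffOn ℝ (⊤ : ℕ∞) b U₀)
    (hc : ContDiffOn ℝ (⊤ : ℕ∞) c U₀) (hd : ContDiffOn ℝ (⊤ : ℕ∞) d U₀)
    (he : ∀ i, ContDiffOn ℝ (⊤ : ℕ∞) (e i) U₀) (hg : ∀ i, ContDiffOn ℝ (⊤ : ℕ∞) (g i) U₀)
    -- the linear part at 0 is diagonal with real nonzero eigenvalues λ₁ = a 0, λ₂ = d 0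
    (hb0 : b 0 = 0) (hc0 : c 0 = 0) (ha0 : a 0 ≠ 0) (hd0 : d 0 ≠ 0)
    (V : (ℝ × ℝ × (Fin l → ℝ)) → (ℝ × ℝ × (Fin l → ℝ)))
    (hV : V = fun x => (x.1 * a x + x.2.1 * b x, x.1 * c x + x.2.1 * d x,
      fun i => x.1 * e i x + x.2.1 * g i x))
    (N : ℕ)
    (hres : ∀ p₁ p₂ : ℕ, 1 ≤ p₁ + p₂ → p₁ + p₂ ≤ N → (p₁ : ℝ) * a 0 + (p₂ : ℝ) * d 0 ≠ 0) :
    ∃ (U₁ : Set (ℝ × ℝ × (Fin l → ℝ))) (G : Fin l → (ℝ × ℝ × (Fin l → ℝ)) → ℝ),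
      IsOpen U₁ ∧ (0 : ℝ × ℝ × (Fin l → ℝ)) ∈ U₁ ∧ U₁ ⊆ U₀ ∧
      (∀ i, ContDiffOn ℝ (⊤ : ℕ∞) (G i) U₁) ∧
      -- the gradients with respect to ζ at 0 are linearly independent
      LinearIndependent ℝ (fun i : Fin l =>
        (fun j : Fin l => fderiv ℝ (G i) 0 ((0 : ℝ), (0 : ℝ), Pi.single j (1 : ℝ)))) ∧
      -- each Lie derivative L_V G i is N-flat by (ξ, η) at 0
      (∀ i : Fin l, ∀ p₁ p₂ : ℕ, p₁ + p₂ ≤ N → ∀ ζ : Fin l → ℝ,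
        ((0 : ℝ), (0 : ℝ), ζ) ∈ U₁ →
        iteratedFDeriv ℝ (p₁ + p₂) (fun x => fderiv ℝ (G i) x (V x))
          ((0 : ℝ), (0 : ℝ), ζ)
          (fun k : Fin (p₁ + p₂) => if (k : ℕ) < p₁
            then ((1 : ℝ), (0 : ℝ), (0 : Fin l → ℝ))
            else ((0 : ℝ), (1 : ℝ), (0 : Fin l → ℝ))) = 0) := by
  let u : Fin 2 → (ℝ × ℝ × (Fin l → ℝ)) →L[ℝ] ℝ :=
    ![.fst ℝ ℝ _, .comp (.fst ℝ ℝ _) (.snd ℝ ℝ _)]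
  let A : Fin 2 → ℝ × ℝ × (Fin l → ℝ) → ℝ × ℝ × (Fin l → ℝ) :=
    ![fun x => (a x, c x, fun i => e i x), fun x => (b x, d x, fun i => g i x)]
  let z (i : Fin l) : (ℝ × ℝ × (Fin l → ℝ)) →L[ℝ] ℝ :=
    .comp (.proj i) (.comp (.snd ℝ ℝ _) (.snd ℝ ℝ _))
  have hVA : V = fun x => ∑ i, u i x • A i x := by ext x <;> simp [hV, u, A]
  have hA : ∀ i, SmoothNear ℝ (A i) 0 := Fin.forall_fin_two.2
    ⟨.of_contDiffOn (ha.prodMk (hc.prodMk (contDiffOn_pi.2 he))) hU₀ h0,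
      .of_contDiffOn (hb.prodMk (hd.prodMk (contDiffOn_pi.2 hg))) hU₀ h0⟩
  choose G hG hGz hflat using fun i => exists_smoothNear_iteratedFDeriv_lieDeriv_eq_zero
    (fun j => .of_continuousLinearMap (u j)) (fun j => map_zero (u j)) hA
    (by simp [Fin.forall_fin_two, ContinuousLinearMap.fderiv, u, A, hb0, hc0])
    (fun p => by simpa [u, A] using hres (p 0) (p 1)) (.of_continuousLinearMap (z i))
  obtain ⟨U₁, hU₁, hU₁o, h0U₁⟩ := eventually_nhds_iff.1
    ((eventually_all.2 hG).and ((eventually_all.2 hflat).and (hU₀.mem_nhds h0)))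
  refine ⟨U₁, G, hU₁o, h0U₁, fun y hy => (hU₁ y hy).2.2,
    fun i y hy => ((hU₁ y hy).1 i).contDiffWithinAt, ?_, fun i p₁ p₂ hp ζ hζ => ?_⟩
  · have hgrad (i j : Fin l) :
        fderiv ℝ (G i) 0 (0, 0, Pi.single j 1) = (Pi.single i 1 : Fin l → ℝ) j := by
      rw [hGz i _ (by simp [u]), (z i).fderiv]
      simp [z, Pi.single_apply, eq_comm]
    simpa only [hgrad] using Pi.linearIndependent_single_one (Fin l) ℝ
  · rw [hVA, (hU₁ _ hζ).2.1 i (by simp [u]) (p₁ + p₂) hp]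
    rfl
end
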